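/- Suppose ω : [0,1] → ℝ is continuous, ω(x) > 0 for all x ∈ (0,1), and: at x = 0 either ω(0) > 0 or (ω(0) = 0 and ω is monotone increasing on some interval [0, δ] with δ > 0); and at x = 1 either ω(1) > 0 or (ω(1) = 0 and ω is monotone decreasing on some interval [1−δ', 1] with δ' > 0). Then there exists a smallest μ > 0 for which there is a nonzero function φ ∈ C¹([0,1]) with φ'(0) = φ'(1) = 0 such that ω φ' is differentiable on (0,1) and (ω(x) φ'(x))' = −μ ω(x) φ(x) for all x ∈ (0,1); moreover, for this μ the solution φ is unique up to multiplication by a nonzero scalar. -/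

import Mathlib

open MeasureTheory Set Filter Topology

noncomputable section

/-- `(φ, φd)` is a (nonzero, C¹ on [0,1]) solution of the Neumann problem
`-(ω φ')' = μ ω φ` on (0,1), with `φ'(0) = φ'(1) = 0`. -/
def NeumannSol (ω : ℝ → ℝ) (μ : ℝ) (φ φd : ℝ → ℝ) : Prop :=
  (∀ x ∈ Icc (0:ℝ) 1, HasDerivWithinAt φ (φd x) (Icc 0 1) x) ∧
  ContinuousOn φd (Icc 0 1) ∧ φd 0 = 0 ∧ φd 1 = 0 ∧
  (∃ x ∈ Icc (0:ℝ) 1, φ x ≠ 0) ∧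
  ∀ x ∈ Ioo (0:ℝ) 1, HasDerivAt (fun t => ω t * φd t) (-(μ * ω x * φ x)) x

/-- `μ` is a Neumann eigenvalue of `-(ω φ')' = μ ω φ`. -/
def IsNeumannEigenvalue (ω : ℝ → ℝ) (μ : ℝ) : Prop := ∃ φ φd, NeumannSol ω μ φ φd


structure Wt (w : ℝ → ℝ) : Prop where
  cont : ContinuousOn w (Ico 0 1)
  pos : ∀ x ∈ Ioo (0:ℝ) 1, 0 < w x
  nn : 0 ≤ w 0
  comp : ∃ δ > (0:ℝ), δ ≤ 1 ∧ ∃ C ≥ (0:ℝ), ∀ s ∈ Ioo 0 δ, ∀ t ∈ Icc 0 s, w t ≤ C * w s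

lemma Wt.nonneg {w : ℝ → ℝ} (h : Wt w) {x : ℝ} (h0 : 0 ≤ x) (h1 : x < 1) : 0 ≤ w x := by
  rcases h0.eq_or_lt with rfl | h0
  · exact h.nn
  · exact (h.pos x ⟨h0, h1⟩).le

def DD (w f : ℝ → ℝ) (s : ℝ) : ℝ := if 0 < s then (∫ t in (0:ℝ)..s, w t * f t) / w s else 0

def KK (w f : ℝ → ℝ) (x : ℝ) : ℝ := ∫ s in (0:ℝ)..x, DD w f s

def kk (w : ℝ → ℝ) : ℕ → ℝ → ℝ
  | 0 => fun _ => 1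
  | n + 1 => KK w (kk w n)

lemma Wt.contmul {w f : ℝ → ℝ} (h : Wt w) (hf : ContinuousOn f (Iio 1)) :
    ContinuousOn (fun t => w t * f t) (Ico 0 1) :=
  h.cont.mul (hf.mono fun _ hx => hx.2)

lemma Wt.intmul {w f : ℝ → ℝ} (h : Wt w) (hf : ContinuousOn f (Iio 1)) {a b : ℝ}
    (ha : 0 ≤ a) (ha1 : a < 1) (hb : 0 ≤ b) (hb1 : b < 1) :
    IntervalIntegrable (fun t => w t * f t) volume a b := by
  apply ContinuousOn.intervalIntegrable
  apply (h.contmul hf).mono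
  intro x hx
  rw [mem_uIcc] at hx
  constructor <;> rcases hx with hx | hx <;> linarith [hx.1, hx.2]

lemma Wt.hasDerivP {w f : ℝ → ℝ} (h : Wt w) (hf : ContinuousOn f (Iio 1)) {x : ℝ}
    (hx : x ∈ Ioo (0:ℝ) 1) :
    HasDerivAt (fun s => ∫ t in (0:ℝ)..s, w t * f t) (w x * f x) x := by
  have hc : ContinuousOn (fun t => w t * f t) (Ioo 0 1) :=
    (h.contmul hf).mono Ioo_subset_Ico_self
  apply intervalIntegral.integral_hasDerivAt_right
  · exact h.intmul hf le_rfl one_pos hx.1.le hx.2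
  · exact hc.stronglyMeasurableAtFilter isOpen_Ioo x hx
  · exact hc.continuousAt (isOpen_Ioo.mem_nhds hx)

lemma Wt.contD {w f : ℝ → ℝ} (h : Wt w) (hf : ContinuousOn f (Iio 1)) :
    ContinuousOn (DD w f) (Iio 1) := by
  intro x hx
  apply ContinuousAt.continuousWithinAt
  rcases lt_trichotomy x 0 with h0 | h0 | h0
  · have : DD w f =ᶠ[𝓝 x] fun _ => 0 := by
      filter_upwards [isOpen_Iio.mem_nhds (show x ∈ Iio (0:ℝ) from h0)] with y hy
      simp only [DD, if_neg (not_lt.2 (le_of_lt (mem_Iio.1 hy)))]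
    exact continuousAt_const.congr this.symm
  · subst h0
    obtain ⟨δ, hδ, hδ1, C, hC, hcomp⟩ := h.comp
    have hfc : ContinuousAt f 0 := hf.continuousAt (isOpen_Iio.mem_nhds hx)
    have hb : ∀ᶠ y in 𝓝 (0:ℝ), |f y| < |f 0| + 1 :=
      hfc.abs.eventually_lt continuousAt_const (by linarith)
    obtain ⟨ε, hε, hball⟩ := Metric.eventually_nhds_iff.1 hb
    have hD0 : DD w f 0 = 0 := by simp [DD]
    rw [ContinuousAt, hD0]
    apply squeeze_zero_norm' (a := fun s => C * (|f 0| + 1) * |s|)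
    · filter_upwards [Metric.ball_mem_nhds (0:ℝ) (lt_min hε hδ)] with s hs
      rw [Metric.mem_ball, dist_zero_right, Real.norm_eq_abs, lt_min_iff] at hs
      by_cases hs0 : 0 < s
      · have hsd : s < δ := (le_abs_self s).trans_lt hs.2
        have hws := h.pos s ⟨hs0, hsd.trans_le hδ1⟩
        simp only [DD, if_pos hs0]
        rw [norm_div, Real.norm_of_nonneg hws.le, div_le_iff₀ hws]
        have := intervalIntegral.norm_integral_le_of_norm_le_const
          (a := 0) (b := s) (f := fun t => w t * f t) (C := C * w s * (|f 0| + 1)) (by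
            intro t ht
            rw [uIoc_of_le hs0.le] at ht
            rw [norm_mul, Real.norm_of_nonneg (h.nonneg ht.1.le (by linarith [ht.2]))]
            apply mul_le_mul (hcomp s ⟨hs0, hsd⟩ t ⟨ht.1.le, ht.2⟩) _ (norm_nonneg _) (by positivity)
            apply le_of_lt
            apply hball
            rw [dist_zero_right, Real.norm_of_nonneg ht.1.le]
            linarith [ht.2, le_abs_self s])
        rw [sub_zero] at this
        linarith [this]
      · simp only [DD, if_neg hs0, norm_zero]; positivity
    · have : Continuous fun s : ℝ => C * (|f 0| + 1) * |s| := by fun_prop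
      simpa using this.tendsto 0
  · have hx' : x ∈ Ioo (0:ℝ) 1 := ⟨h0, hx⟩
    have : DD w f =ᶠ[𝓝 x] fun s => (∫ t in (0:ℝ)..s, w t * f t) / w s := by
      filter_upwards [isOpen_Ioi.mem_nhds (show x ∈ Ioi (0:ℝ) from h0)] with y hy
      simp only [DD, if_pos (show 0 < y from hy)]
    refine ContinuousAt.congr ?_ this.symm
    refine (h.hasDerivP hf hx').continuousAt.div ?_ (h.pos x hx').ne'
    exact (h.cont.mono Ioo_subset_Ico_self).continuousAt (isOpen_Ioo.mem_nhds hx')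

lemma Wt.hasDerivK {w f : ℝ → ℝ} (h : Wt w) (hf : ContinuousOn f (Iio 1)) {x : ℝ}
    (hx : x < 1) : HasDerivAt (KK w f) (DD w f x) x := by
  have hc := h.contD hf
  apply intervalIntegral.integral_hasDerivAt_right
  · apply ContinuousOn.intervalIntegrable
    apply hc.mono
    intro y hy
    rw [mem_uIcc] at hy
    rw [mem_Iio]
    rcases hy with hy | hy <;> linarith [hy.1, hy.2]
  · exact hc.stronglyMeasurableAtFilter isOpen_Iio x hx
  · exact hc.continuousAt (isOpen_Iio.mem_nhds hx)

lemma Wt.contK {w f : ℝ → ℝ} (h : Wt w) (hf : ContinuousOn f (Iio 1)) :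
    ContinuousOn (KK w f) (Iio 1) := fun _ hx =>
  (h.hasDerivK hf hx).continuousAt.continuousWithinAt

lemma Wt.contk {w : ℝ → ℝ} (h : Wt w) (n : ℕ) : ContinuousOn (kk w n) (Iio 1) := by
  induction n with
  | zero => exact continuousOn_const
  | succ n ih => exact h.contK ih

lemma KK_nonpos (w f : ℝ → ℝ) {x : ℝ} (hx : x ≤ 0) : KK w f x = 0 := by
  unfold KK
  apply intervalIntegral.integral_zero_ae
  refine Eventually.of_forall fun t ht => ?_
  rw [uIoc_of_ge hx] at ht
  simp only [DD, if_neg (not_lt.2 ht.2)]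

lemma Wt.exC {w : ℝ → ℝ} (h : Wt w) {b : ℝ} (hb : b < 1) :
    ∃ C ≥ (0:ℝ), ∀ s ∈ Ioc 0 b, (∫ t in (0:ℝ)..s, w t) ≤ C * w s := by
  have hc := (h.contD (f := fun _ => 1) continuousOn_const).mono
    (show Icc 0 b ⊆ Iio 1 from fun x hx => lt_of_le_of_lt hx.2 hb)
  obtain ⟨C, hC⟩ := isCompact_Icc.exists_bound_of_continuousOn hc
  refine ⟨max C 0, le_max_right _ _, fun s hs => ?_⟩
  have h1 := hC s ⟨hs.1.le, hs.2⟩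
  have hws := h.pos s ⟨hs.1, hs.2.trans_lt hb⟩
  simp only [DD, if_pos hs.1, mul_one] at h1
  have h2 := (le_abs_self _).trans (h1.trans (le_max_left C 0))
  rwa [div_le_iff₀ hws] at h2

lemma Wt.boundD {w f : ℝ → ℝ} (h : Wt w) (hf : ContinuousOn f (Iio 1)) {b C B : ℝ} (n : ℕ)
    (hb : b < 1) (hB : 0 ≤ B) (hC0 : 0 ≤ C)
    (hC : ∀ s ∈ Ioc 0 b, (∫ t in (0:ℝ)..s, w t) ≤ C * w s)
    (hfB : ∀ t ∈ Icc 0 b, |f t| ≤ B * t ^ n) :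
    ∀ s ∈ Icc 0 b, |DD w f s| ≤ C * B * s ^ n := by
  intro s hs
  have hw1 : ∀ s ∈ Ico (0:ℝ) 1, IntervalIntegrable w volume 0 s := by
    intro s hs
    simpa using h.intmul (f := fun _ => 1) continuousOn_const le_rfl one_pos hs.1 hs.2
  rcases hs.1.eq_or_lt with rfl | hs0
  · simp only [DD, lt_irrefl, if_false, abs_zero]; positivity
  have hws := h.pos s ⟨hs0, hs.2.trans_lt hb⟩
  simp only [DD, if_pos hs0]
  rw [abs_div, abs_of_pos hws, div_le_iff₀ hws]
  have h1 : ‖∫ t in (0:ℝ)..s, w t * f t‖ ≤ ∫ t in (0:ℝ)..s, w t * (B * s ^ n) := by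
    apply intervalIntegral.norm_integral_le_of_norm_le hs0.le
    · refine Eventually.of_forall fun t ht => ?_
      have hwt := h.nonneg ht.1.le (by linarith [ht.2, hs.2])
      rw [norm_mul, Real.norm_of_nonneg hwt]
      apply mul_le_mul_of_nonneg_left _ hwt
      have h2 := hfB t ⟨ht.1.le, ht.2.trans hs.2⟩
      have h3 : t ^ n ≤ s ^ n := pow_le_pow_left₀ ht.1.le ht.2 n
      exact h2.trans (mul_le_mul_of_nonneg_left h3 hB)
    · exact (hw1 s ⟨hs.1, hs.2.trans_lt hb⟩).mul_const _
  rw [intervalIntegral.integral_mul_const, Real.norm_eq_abs] at h1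
  have h4 := mul_le_mul_of_nonneg_right (hC s ⟨hs0, hs.2⟩) (show 0 ≤ B * s ^ n by positivity)
  calc _ ≤ _ := h1
    _ ≤ _ := h4
    _ = _ := by ring

lemma Wt.boundK {w f : ℝ → ℝ} (h : Wt w) (hf : ContinuousOn f (Iio 1)) {b C B : ℝ} (n : ℕ)
    (hb : b < 1) (hB : 0 ≤ B) (hC0 : 0 ≤ C)
    (hC : ∀ s ∈ Ioc 0 b, (∫ t in (0:ℝ)..s, w t) ≤ C * w s)
    (hfB : ∀ t ∈ Icc 0 b, |f t| ≤ B * t ^ n) :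
    ∀ s ∈ Icc 0 b, |KK w f s| ≤ C * B / (n + 1) * s ^ (n + 1) := by
  intro s hs
  have h1 : ‖∫ t in (0:ℝ)..s, DD w f t‖ ≤ ∫ t in (0:ℝ)..s, (C * B) * t ^ n := by
    apply intervalIntegral.norm_integral_le_of_norm_le hs.1
    · refine Eventually.of_forall fun t ht => ?_
      exact h.boundD hf n hb hB hC0 hC hfB t ⟨ht.1.le, ht.2.trans hs.2⟩
    · exact Continuous.intervalIntegrable (by fun_prop) _ _
  rw [intervalIntegral.integral_const_mul, integral_pow, Real.norm_eq_abs] at h1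
  refine h1.trans (le_of_eq ?_)
  rw [zero_pow (Nat.succ_ne_zero n)]; ring

lemma Wt.boundk {w : ℝ → ℝ} (h : Wt w) {b C : ℝ}
    (hb : b < 1) (hC0 : 0 ≤ C)
    (hC : ∀ s ∈ Ioc 0 b, (∫ t in (0:ℝ)..s, w t) ≤ C * w s) (n : ℕ) :
    ∀ s ∈ Icc 0 b, |kk w n s| ≤ C ^ n / n.factorial * s ^ n := by
  induction n with
  | zero => intro s _; simp [kk]
  | succ n ih =>
    intro s hs
    have := h.boundK (h.contk n) n hb (by positivity) hC0 hC ih s hs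
    refine this.trans (le_of_eq ?_)
    rw [Nat.factorial_succ]; push_cast; field_simp; ring

lemma Wt.boundk' {w : ℝ → ℝ} (h : Wt w) {b C : ℝ}
    (hb : b < 1) (hC0 : 0 ≤ C)
    (hC : ∀ s ∈ Ioc 0 b, (∫ t in (0:ℝ)..s, w t) ≤ C * w s) (n : ℕ) {s : ℝ} (hs : s ≤ b) :
    |kk w n s| ≤ C ^ n / n.factorial := by
  rcases le_or_gt 0 s with h0 | h0
  · refine (h.boundk hb hC0 hC n s ⟨h0, hs⟩).trans ?_
    apply mul_le_of_le_one_right (by positivity)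
    exact pow_le_one₀ h0 (by linarith)
  · cases n with
    | zero => simp [kk]
    | succ n => rw [kk, KK_nonpos _ _ h0.le, abs_zero]; positivity

def LL (w : ℝ → ℝ) (μ x : ℝ) : ℝ := ∑' n : ℕ, (-μ) ^ n * kk w n x

lemma Wt.bterm {w : ℝ → ℝ} (h : Wt w) {b C m μ : ℝ}
    (hb : b < 1) (hC0 : 0 ≤ C)
    (hC : ∀ s ∈ Ioc 0 b, (∫ t in (0:ℝ)..s, w t) ≤ C * w s) (n : ℕ) {s : ℝ} (hs : s ≤ b)
    (hμ : |μ| ≤ m) : ‖(-μ) ^ n * kk w n s‖ ≤ (m * C) ^ n / n.factorial := by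
  rw [norm_mul, norm_pow, norm_neg, mul_pow, mul_div_assoc]
  exact mul_le_mul (pow_le_pow_left₀ (norm_nonneg _) hμ n) (h.boundk' hb hC0 hC n hs)
    (norm_nonneg _) (pow_nonneg ((abs_nonneg _).trans hμ) _)

lemma Wt.contLL {w : ℝ → ℝ} (h : Wt w) {μ x : ℝ} (hx : x < 1) :
    ContinuousAt (fun p : ℝ × ℝ => LL w p.1 p.2) (μ, x) := by
  obtain ⟨b, hxb, hb⟩ := exists_between hx
  obtain ⟨C, hC0, hC⟩ := h.exC hb
  have hc : ContinuousOn (fun p : ℝ × ℝ => LL w p.1 p.2)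
      (Ioo (-(|μ| + 1)) (|μ| + 1) ×ˢ Iio b) := by
    apply continuousOn_tsum (u := fun n : ℕ => ((|μ| + 1) * C) ^ n / n.factorial)
    · intro n
      apply ContinuousOn.mul
      · exact Continuous.continuousOn (by fun_prop)
      · exact (h.contk n).comp continuousOn_snd fun p hp => lt_trans hp.2 hb
    · exact Real.summable_pow_div_factorial _
    · intro n p hp
      exact h.bterm hb hC0 hC n (le_of_lt hp.2) (abs_le.2 ⟨hp.1.1.le, hp.1.2.le⟩)
  apply hc.continuousAt
  apply (isOpen_Ioo.prod isOpen_Iio).mem_nhds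
  refine ⟨⟨?_, ?_⟩, hxb⟩
  · linarith [neg_abs_le μ]
  · linarith [le_abs_self μ]

lemma Wt.contLx {w : ℝ → ℝ} (h : Wt w) (μ : ℝ) : ContinuousOn (LL w μ) (Iio 1) := by
  intro x hx
  apply ContinuousAt.continuousWithinAt
  exact (h.contLL (μ := μ) hx).comp (f := fun x : ℝ => (μ, x)) (by fun_prop)

lemma sum_int {F : ℕ → ℝ → ℝ} {c : ℕ → ℝ} {x : ℝ} (hx : 0 ≤ x) (hc : Summable c)
    (hF : ∀ n, ContinuousOn (F n) (Ioc 0 x)) (hb : ∀ n, ∀ t ∈ Ioc 0 x, ‖F n t‖ ≤ c n) :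
    (∫ t in (0:ℝ)..x, ∑' n, F n t) = ∑' n, ∫ t in (0:ℝ)..x, F n t := by
  refine (HasSum.tsum_eq ?_).symm
  apply intervalIntegral.hasSum_integral_of_dominated_convergence (fun n _ => c n)
  · intro n
    rw [uIoc_of_le hx]
    exact (hF n).aestronglyMeasurable measurableSet_Ioc
  · intro n
    refine Eventually.of_forall fun t ht => ?_
    rw [uIoc_of_le hx] at ht
    exact hb n t ht
  · exact Eventually.of_forall fun t _ => hc
  · exact intervalIntegrable_const
  · refine Eventually.of_forall fun t ht => ?_
    rw [uIoc_of_le hx] at ht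
    exact (Summable.of_norm_bounded hc (fun n => hb n t ht)).hasSum

lemma Wt.DL {w : ℝ → ℝ} (h : Wt w) {μ x : ℝ} (hx0 : 0 < x) (hx : x < 1) :
    DD w (LL w μ) x = ∑' n, (-μ) ^ n * DD w (kk w n) x := by
  obtain ⟨C, hC0, hC⟩ := h.exC hx
  simp only [DD, if_pos hx0, LL]
  obtain ⟨M, hM⟩ := isCompact_Icc.exists_bound_of_continuousOn
    (h.cont.mono (show Icc 0 x ⊆ Ico 0 1 from fun y hy => ⟨hy.1, hy.2.trans_lt hx⟩))
  have h1 : (∫ t in (0:ℝ)..x, w t * ∑' n, (-μ) ^ n * kk w n t)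
      = ∑' n, ∫ t in (0:ℝ)..x, w t * ((-μ) ^ n * kk w n t) := by
    simp_rw [← tsum_mul_left]
    apply sum_int (c := fun n => M * ((|μ| * C) ^ n / n.factorial)) hx0.le
    · exact (Real.summable_pow_div_factorial _).mul_left _
    · intro n
      apply (h.contmul ((h.contk n).const_mul ((-μ) ^ n))).mono
      intro y hy
      exact ⟨hy.1.le, hy.2.trans_lt hx⟩
    · intro n t ht
      rw [norm_mul]
      have := hM t ⟨ht.1.le, ht.2⟩
      exact mul_le_mul this (h.bterm hx hC0 hC n ht.2 le_rfl) (norm_nonneg _)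
        ((norm_nonneg _).trans this)
  rw [h1, ← tsum_div_const]
  congr 1; ext n
  rw [← mul_div_assoc, ← intervalIntegral.integral_const_mul]
  congr 2; ext t; ring

lemma Wt.KL {w : ℝ → ℝ} (h : Wt w) {μ x : ℝ} (hx0 : 0 ≤ x) (hx : x < 1) :
    KK w (LL w μ) x = ∑' n, (-μ) ^ n * kk w (n + 1) x := by
  obtain ⟨C, hC0, hC⟩ := h.exC hx
  have h1 : KK w (LL w μ) x = ∫ t in (0:ℝ)..x, ∑' n, (-μ) ^ n * DD w (kk w n) t := by
    unfold KK
    apply intervalIntegral.integral_congr_ae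
    refine Eventually.of_forall fun t ht => ?_
    rw [uIoc_of_le hx0] at ht
    exact h.DL ht.1 (ht.2.trans_lt hx)
  rw [h1, sum_int (c := fun n => C * ((|μ| * C) ^ n / n.factorial)) hx0]
  · congr 1; ext n
    rw [intervalIntegral.integral_const_mul]; rfl
  · exact (Real.summable_pow_div_factorial _).mul_left _
  · intro n
    apply ((h.contD (h.contk n)).const_mul ((-μ) ^ n)).mono
    intro y hy
    exact hy.2.trans_lt hx
  · intro n t ht
    have h2 := h.boundD (h.contk n) (B := C ^ n / n.factorial) 0 hx (by positivity) hC0 hC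
      (fun t ht => by simpa using h.boundk' hx hC0 hC n ht.2) t ⟨ht.1.le, ht.2⟩
    rw [norm_mul, norm_pow, norm_neg, Real.norm_eq_abs, Real.norm_eq_abs]
    calc _ ≤ |μ| ^ n * _ := mul_le_mul_of_nonneg_left h2 (by positivity)
      _ = _ := by rw [mul_pow]; ring

lemma Wt.Leq {w : ℝ → ℝ} (h : Wt w) {μ x : ℝ} (hx : x < 1) :
    LL w μ x = 1 - μ * KK w (LL w μ) x := by
  obtain ⟨C, hC0, hC⟩ := h.exC hx
  have hs : Summable fun n => (-μ) ^ n * kk w n x :=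
    Summable.of_norm_bounded (Real.summable_pow_div_factorial (|μ| * C))
      (fun n => h.bterm hx hC0 hC n le_rfl le_rfl)
  have h0 : LL w μ x = 1 + ∑' n, (-μ) ^ (n + 1) * kk w (n + 1) x := by
    rw [LL, hs.tsum_eq_zero_add]; simp [kk]
  rw [h0]
  rcases le_or_gt 0 x with hx0 | hx0
  · rw [h.KL hx0 hx, ← tsum_mul_left, sub_eq_add_neg, ← tsum_neg]
    congr 2; ext n; ring
  · simp [kk, KK_nonpos _ _ hx0.le]

/-- the left-regular family of solutions -/
structure LSol (w : ℝ → ℝ) (L g : ℝ → ℝ → ℝ) : Prop where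
  L0 : ∀ μ, L μ 0 = 1
  g0 : ∀ μ, g μ 0 = 0
  Lz : ∀ x < 1, L 0 x = 1
  der : ∀ μ, ∀ x < 1, HasDerivAt (L μ) (g μ x) x
  gc : ∀ μ, ContinuousOn (g μ) (Iio 1)
  fl : ∀ μ, ∀ x ∈ Ioo (0:ℝ) 1, w x * g μ x = -(μ * ∫ t in (0:ℝ)..x, w t * L μ t)
  ode : ∀ μ, ∀ x ∈ Ioo (0:ℝ) 1, HasDerivAt (fun t => w t * g μ t) (-(μ * w x * L μ x)) x
  jc : ∀ μ, ∀ x < 1, ContinuousAt (fun p : ℝ × ℝ => L p.1 p.2) (μ, x)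

lemma Wt.exists_LSol {w : ℝ → ℝ} (h : Wt w) : ∃ L g, LSol w L g := by
  have hfl : ∀ μ, ∀ x ∈ Ioo (0:ℝ) 1, w x * (-(μ * DD w (LL w μ) x)) =
      -(μ * ∫ t in (0:ℝ)..x, w t * LL w μ t) := by
    intro μ x hx
    have := (h.pos x hx).ne'
    simp only [DD, if_pos hx.1]
    field_simp
  refine ⟨LL w, fun μ x => -(μ * DD w (LL w μ) x), ?_, ?_, ?_, ?_, ?_, hfl, ?_, ?_⟩
  · intro μ
    rw [h.Leq one_pos, KK_nonpos _ _ le_rfl]; simp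
  · intro μ
    simp [DD]
  · intro x hx
    rw [h.Leq hx]; simp
  · intro μ x hx
    have h1 : HasDerivAt (fun y => 1 - μ * KK w (LL w μ) y) (-(μ * DD w (LL w μ) x)) x :=
      ((h.hasDerivK (h.contLx μ) hx).const_mul μ).const_sub 1
    apply h1.congr_of_eventuallyEq
    filter_upwards [isOpen_Iio.mem_nhds (show x ∈ Iio (1:ℝ) from hx)] with y hy
    exact h.Leq hy
  · intro μ
    exact ((h.contD (h.contLx μ)).const_mul μ).fun_neg
  · intro μ x hx
    have h1 := ((h.hasDerivP (h.contLx μ) hx).const_mul μ).fun_neg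
    rw [mul_assoc]
    apply h1.congr_of_eventuallyEq
    filter_upwards [isOpen_Ioo.mem_nhds hx] with y hy
    exact hfl μ y hy
  · intro μ x hx
    exact h.contLL hx

lemma der_conv {f f' : ℝ → ℝ} {a a' x : ℝ} (h : HasDerivAt f a x) (hf : ∀ t, f' t = f t)
    (ha : a' = a) : HasDerivAt f' a' x := by
  have : f' = f := funext hf
  rw [this, ha]; exact h

lemma const_of_der {f : ℝ → ℝ} {a b : ℝ} (hab : a < b) (hc : ContinuousOn f (Icc a b))
    (hd : ∀ x ∈ Ioo a b, HasDerivAt f 0 x) : f b = f a := by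
  obtain ⟨c, _, h⟩ := exists_hasDerivAt_eq_slope f (fun _ => 0) hab hc hd
  have : b - a ≠ 0 := by linarith
  field_simp at h
  linarith

section
variable {w : ℝ → ℝ} {L g : ℝ → ℝ → ℝ}

lemma LSol.contx (hS : LSol w L g) (μ : ℝ) : ContinuousOn (L μ) (Iio 1) := fun x hx =>
  (hS.der μ x hx).continuousAt.continuousWithinAt

lemma LSol.gneg (hw : Wt w) (hS : LSol w L g) {μ x : ℝ} (hμ : 0 < μ) (hx : x < 1)
    (hL : ∀ y ∈ Ico 0 x, 0 ≤ L μ y) : ∀ y ∈ Ioc 0 x, g μ y < 0 := by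
  intro y hy
  have hy1 : y ∈ Ioo (0:ℝ) 1 := ⟨hy.1, hy.2.trans_lt hx⟩
  have hwy := hw.pos y hy1
  have hLc := hS.contx μ
  have hev : ∀ᶠ z in 𝓝 (0:ℝ), 0 < L μ z := by
    have : ContinuousAt (L μ) 0 := hLc.continuousAt (isOpen_Iio.mem_nhds (mem_Iio.2 one_pos))
    apply this.eventually (lt_mem_nhds _)
    rw [hS.L0]; exact one_pos
  obtain ⟨ε, hε, hball⟩ := Metric.eventually_nhds_iff.1 hev
  have hI : 0 < ∫ t in (0:ℝ)..y, w t * L μ t := by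
    apply intervalIntegral.integral_pos hy.1
    · exact (hw.contmul hLc).mono fun z hz => ⟨hz.1, hz.2.trans_lt hy1.2⟩
    · intro z hz
      have hz1 : z ∈ Icc 0 x := ⟨hz.1.le, hz.2.trans hy.2⟩
      apply mul_nonneg (hw.nonneg hz.1.le (hz1.2.trans_lt hx))
      rcases hz1.2.eq_or_lt with h | h
      · have hcl : ContinuousWithinAt (L μ) (Iio z) z :=
          (hS.der μ z (hz1.2.trans_lt hx)).continuousAt.continuousWithinAt
        refine ge_of_tendsto hcl.tendsto ?_
        filter_upwards [Ioo_mem_nhdsLT hz.1] with t ht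
        exact hL t ⟨ht.1.le, ht.2.trans_eq h⟩
      · exact hL z ⟨hz1.1, h⟩
    · refine ⟨min (ε / 2) (y / 2), ⟨by have := hy.1; positivity, ?_⟩, ?_⟩
      · exact (min_le_right _ _).trans (by linarith [hy.1])
      · have h0 : 0 < min (ε / 2) (y / 2) := by have := hy.1; positivity
        have h1 := min_le_left (ε / 2) (y / 2)
        have h2 := min_le_right (ε / 2) (y / 2)
        apply mul_pos
        · exact hw.pos _ ⟨h0, by linarith [hy1.2]⟩
        · apply hball
          rw [dist_zero_right, Real.norm_of_nonneg h0.le]; linarith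
  have := hS.fl μ y hy1
  have h3 : w y * g μ y < 0 := by rw [this]; have := mul_pos hμ hI; linarith
  by_contra hcon
  push Not at hcon
  exact absurd h3 (not_lt.2 (mul_nonneg hwy.le hcon))

lemma LSol.strict (hw : Wt w) (hS : LSol w L g) {μ x : ℝ} (hμ : 0 < μ) (hx : x < 1)
    (hL : ∀ y ∈ Ico 0 x, 0 ≤ L μ y) {y z : ℝ} (hy : 0 ≤ y) (hyz : y < z) (hz : z ≤ x) :
    L μ z < L μ y := by
  obtain ⟨c, hc, h⟩ := exists_hasDerivAt_eq_slope (L μ) (g μ) hyz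
    ((hS.contx μ).mono fun t ht => (ht.2.trans hz).trans_lt hx)
    (fun t ht => hS.der μ t ((ht.2.trans_le hz).trans hx))
  have h1 := hS.gneg hw hμ hx hL c ⟨hy.trans_lt hc.1, (hc.2.trans_le hz).le⟩
  rw [h, div_neg_iff] at h1
  rcases h1 with h1 | h1 <;> linarith

lemma LSol.bdd (hw : Wt w) (hS : LSol w L g) :
    ∃ M > (0:ℝ), ∀ μ ≥ M, ¬ ∀ x ∈ Icc (0:ℝ) (1/2), 0 < L μ x := by
  obtain ⟨C, hC⟩ := isCompact_Icc.exists_bound_of_continuousOn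
    (hw.cont.mono (show Icc (0:ℝ) (1/2) ⊆ Ico 0 1 from fun y hy => ⟨hy.1, by linarith [hy.2]⟩))
  have hCp : 0 < C := by
    have h1 := hC (1/2) ⟨by norm_num, le_rfl⟩
    have h2 := hw.pos (1/2) ⟨by norm_num, by norm_num⟩
    exact lt_of_lt_of_le h2 ((le_abs_self _).trans h1)
  have hwi : IntervalIntegrable w volume 0 (1/4) := by
    simpa using hw.intmul (f := fun _ => 1) continuousOn_const le_rfl one_pos
      (show (0:ℝ) ≤ 1/4 by norm_num) (by norm_num)
  set I := ∫ t in (0:ℝ)..(1/4), w t with hI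
  have hIp : 0 < I := by
    apply intervalIntegral.intervalIntegral_pos_of_pos_on hwi _ (by norm_num)
    intro x hx
    exact hw.pos x ⟨hx.1, by linarith [hx.2]⟩
  refine ⟨4 * C / I, by positivity, fun μ hμ hL => ?_⟩
  have hμ0 : 0 < μ := lt_of_lt_of_le (by positivity) hμ
  have hL' : ∀ y ∈ Ico (0:ℝ) (1/2), 0 ≤ L μ y := fun y hy => (hL y ⟨hy.1, hy.2.le⟩).le
  obtain ⟨ξ, hξ, h⟩ := exists_hasDerivAt_eq_slope (L μ) (g μ) (show (1/4:ℝ) < 1/2 by norm_num)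
    ((hS.contx μ).mono fun t ht => by rw [mem_Iio]; linarith [ht.2])
    (fun t ht => hS.der μ t (by linarith [ht.2]))
  have hξ1 : ξ ∈ Ioo (0:ℝ) 1 := ⟨by linarith [hξ.1], by linarith [hξ.2]⟩
  have hfl := hS.fl μ ξ hξ1
  have hLc := hS.contx μ
  have h1 : L μ (1/4) * I ≤ ∫ t in (0:ℝ)..ξ, w t * L μ t := by
    have hq : (0:ℝ) ≤ 1/4 := by norm_num
    have hq1 : (1/4:ℝ) < 1 := by norm_num
    rw [← intervalIntegral.integral_add_adjacent_intervals
      (hw.intmul hLc le_rfl one_pos hq hq1)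
      (hw.intmul hLc hq hq1 hξ1.1.le hξ1.2)]
    have h2 : 0 ≤ ∫ t in (1/4:ℝ)..ξ, w t * L μ t := by
      apply intervalIntegral.integral_nonneg hξ.1.le
      intro t ht
      exact mul_nonneg (hw.nonneg (by linarith [ht.1]) (by linarith [ht.2, hξ.2]))
        (hL t ⟨by linarith [ht.1], by linarith [ht.2, hξ.2]⟩).le
    have h3 : L μ (1/4) * I ≤ ∫ t in (0:ℝ)..(1/4), w t * L μ t := by
      rw [hI, ← intervalIntegral.integral_const_mul]
      apply intervalIntegral.integral_mono_on hq (hwi.const_mul _)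
        (hw.intmul hLc le_rfl one_pos hq hq1)
      intro t ht
      rw [mul_comm]
      apply mul_le_mul_of_nonneg_left _ (hw.nonneg ht.1 (by linarith [ht.2]))
      rcases ht.2.eq_or_lt with rfl | h
      · exact le_rfl
      · exact (hS.strict hw hμ0 (by norm_num) hL' ht.1 h (by norm_num)).le
    linarith
  have hwξ := hw.pos ξ hξ1
  have hwC : w ξ ≤ C := (le_abs_self _).trans (hC ξ ⟨hξ1.1.le, hξ.2.le⟩)
  have hgn := hS.gneg hw hμ0 (by norm_num) hL' ξ ⟨hξ1.1, hξ.2.le⟩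
  have hq := hL (1/4) ⟨by norm_num, by norm_num⟩
  have hh := hL (1/2) ⟨by norm_num, by norm_num⟩
  have hg4 : g μ ξ = 4 * (L μ (1/2) - L μ (1/4)) := by rw [h]; ring
  have h5 : w ξ * (-g μ ξ) ≤ C * (-g μ ξ) := mul_le_mul_of_nonneg_right hwC (by linarith)
  have h6 : μ * (L μ (1/4) * I) ≤ μ * ∫ t in (0:ℝ)..ξ, w t * L μ t :=
    mul_le_mul_of_nonneg_left h1 hμ0.le
  have h7 : 4 * C ≤ μ * I := by
    rwa [ge_iff_le, div_le_iff₀ hIp] at hμ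
  have h8 : 4 * C * L μ (1/4) ≤ μ * I * L μ (1/4) := mul_le_mul_of_nonneg_right h7 hq.le
  have h9 : 0 < C * L μ (1/2) := mul_pos hCp hh
  rw [hg4] at h5 hfl
  nlinarith

structure HSol (w : ℝ → ℝ) (μ : ℝ) (φ φd : ℝ → ℝ) : Prop where
  c : ContinuousOn φ (Ico 0 1)
  dc : ContinuousOn φd (Ico 0 1)
  d0 : φd 0 = 0
  der : ∀ x ∈ Ioo (0:ℝ) 1, HasDerivAt φ (φd x) x
  ode : ∀ x ∈ Ioo (0:ℝ) 1, HasDerivAt (fun t => w t * φd t) (-(μ * w x * φ x)) x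

lemma HSol.rep {μ c : ℝ} {φ φd : ℝ → ℝ} (hw : Wt w) (hS : LSol w L g) (hφ : HSol w μ φ φd)
    (hc : c ∈ Ioo (0:ℝ) 1) (hL : ∀ x ∈ Ico 0 c, 0 < L μ x) :
    (∀ x ∈ Icc 0 c, φ x = φ 0 * L μ x) ∧ φd c = φ 0 * g μ c := by
  have hLc : ContinuousOn (L μ) (Ico 0 1) := (hS.contx μ).mono fun _ h => h.2
  have hgc : ContinuousOn (g μ) (Ico 0 1) := (hS.gc μ).mono fun _ h => h.2
  have hW : ∀ x ∈ Ioo (0:ℝ) 1, φd x * L μ x - g μ x * φ x = 0 := by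
    intro x hx
    have h1 := const_of_der (f := fun x => (w x * φd x) * L μ x - (w x * g μ x) * φ x) hx.1
      ((((hw.cont.mul hφ.dc).mul hLc).sub ((hw.cont.mul hgc).mul hφ.c)).mono
        fun y hy => ⟨hy.1, hy.2.trans_lt hx.2⟩) (by
        intro y hy
        have hy1 : y ∈ Ioo (0:ℝ) 1 := ⟨hy.1, hy.2.trans hx.2⟩
        have := ((hφ.ode y hy1).mul (hS.der μ y hy1.2)).sub ((hS.ode μ y hy1).mul (hφ.der y hy1))
        refine der_conv this (fun t => rfl) ?_
        ring)
    simp only [hφ.d0, hS.g0, mul_zero, zero_mul, sub_zero] at h1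
    have h2 : w x * (φd x * L μ x - g μ x * φ x) = 0 := by linarith
    exact (mul_eq_zero.1 h2).resolve_left (hw.pos x hx).ne'
  have h1 : EqOn φ (fun x => φ 0 * L μ x) (Ico 0 c) := by
    intro x hx
    rcases hx.1.eq_or_lt with rfl | hx0
    · simp [hS.L0]
    have hsub : Icc 0 x ⊆ Ico 0 1 := fun y hy => ⟨hy.1, hy.2.trans_lt (hx.2.trans hc.2)⟩
    have := const_of_der (f := fun y => φ y / L μ y) hx0
      ((hφ.c.mono hsub).div (hLc.mono hsub)
        fun y hy => (hL y ⟨hy.1, hy.2.trans_lt hx.2⟩).ne') (by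
        intro y hy
        have hy1 : y ∈ Ioo (0:ℝ) 1 := ⟨hy.1, hy.2.trans (hx.2.trans hc.2)⟩
        have hne := (hL y ⟨hy.1.le, hy.2.trans hx.2⟩).ne'
        have := (hφ.der y hy1).div (hS.der μ y hy1.2) hne
        refine der_conv this (fun t => rfl) ?_
        rw [eq_div_iff (pow_ne_zero 2 hne)]
        linarith [hW y hy1])
    simp only [hS.L0, div_one] at this
    have hne := (hL x hx).ne'
    rw [div_eq_iff hne] at this
    exact this
  have hsub : Icc 0 c ⊆ Ico 0 1 := fun y hy => ⟨hy.1, hy.2.trans_lt hc.2⟩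
  have h2 : EqOn φ (fun x => φ 0 * L μ x) (Icc 0 c) :=
    h1.of_subset_closure (hφ.c.mono hsub) ((hLc.mono hsub).const_mul _) Ico_subset_Icc_self
      (by rw [closure_Ico hc.1.ne])
  refine ⟨fun x hx => h2 hx, ?_⟩
  have h3 : HasDerivWithinAt φ (φd c) (Icc 0 c) c := (hφ.der c hc).hasDerivWithinAt
  have h4 : HasDerivWithinAt φ (φ 0 * g μ c) (Icc 0 c) c :=
    (((hS.der μ c hc.2).const_mul (φ 0)).hasDerivWithinAt).congr (fun x hx => h2 hx)
      (h2 ⟨hc.1.le, le_rfl⟩)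
  exact (uniqueDiffOn_Icc hc.1 c ⟨hc.1.le, le_rfl⟩).eq_deriv _ h3 h4

end

lemma NeumannSol.left {w φ φd : ℝ → ℝ} {μ : ℝ} (h : NeumannSol w μ φ φd) : HSol w μ φ φd := by
  obtain ⟨h1, h2, h3, h4, h5, h6⟩ := h
  refine ⟨fun x hx => ?_, h2.mono Ico_subset_Icc_self, h3, fun x hx => ?_, h6⟩
  · exact (h1 x ⟨hx.1, hx.2.le⟩).continuousWithinAt.mono Ico_subset_Icc_self
  · exact (h1 x ⟨hx.1.le, hx.2.le⟩).hasDerivAt (Icc_mem_nhds hx.1 hx.2)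

lemma NeumannSol.right {w φ φd : ℝ → ℝ} {μ : ℝ} (h : NeumannSol w μ φ φd) :
    HSol (fun x => w (1 - x)) μ (fun x => φ (1 - x)) (fun x => -φd (1 - x)) := by
  obtain ⟨h1, h2, h3, h4, h5, h6⟩ := h
  have hm : MapsTo (fun x : ℝ => 1 - x) (Ico 0 1) (Icc 0 1) := fun x hx =>
    ⟨by linarith [hx.2], by linarith [hx.1]⟩
  have hcs : ContinuousOn (fun x : ℝ => 1 - x) (Ico 0 1) := by fun_prop
  refine ⟨?_, ?_, ?_, fun x hx => ?_, fun x hx => ?_⟩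
  · exact ContinuousOn.comp (fun x hx => (h1 x hx).continuousWithinAt) hcs hm
  · exact (h2.comp hcs hm).fun_neg
  · simp [h4]
  · have hx' : 1 - x ∈ Ioo (0:ℝ) 1 := ⟨by linarith [hx.2], by linarith [hx.1]⟩
    have := (h1 (1 - x) ⟨hx'.1.le, hx'.2.le⟩).hasDerivAt (Icc_mem_nhds hx'.1 hx'.2)
    exact this.comp_const_sub 1 x
  · have hx' : 1 - x ∈ Ioo (0:ℝ) 1 := ⟨by linarith [hx.2], by linarith [hx.1]⟩
    have := ((h6 (1 - x) hx').comp_const_sub 1 x).fun_neg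
    exact der_conv this (fun t => by ring) (by ring)

lemma glue_cont {f1 f2 : ℝ → ℝ} {c x : ℝ} (h1 : x ≤ c → ContinuousAt f1 x)
    (h2 : c ≤ x → ContinuousAt f2 x) (hc : f1 c = f2 c) :
    ContinuousAt (fun t => if t ≤ c then f1 t else f2 t) x := by
  rcases lt_trichotomy x c with h | h | h
  · apply (h1 h.le).congr
    filter_upwards [isOpen_Iio.mem_nhds (show x ∈ Iio c from h)] with y hy
    rw [if_pos (le_of_lt (mem_Iio.1 hy))]
  · subst h
    rw [← continuousWithinAt_univ, ← Iic_union_Ici (a := x)]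
    apply ContinuousWithinAt.union
    · apply (h1 le_rfl).continuousWithinAt.congr
      · intro y hy; exact if_pos hy
      · exact if_pos le_rfl
    · have : ∀ y ∈ Ici x, (if y ≤ x then f1 y else f2 y) = f2 y := by
        intro y hy
        rcases (mem_Ici.1 hy).eq_or_lt with rfl | hlt
        · rw [if_pos le_rfl, hc]
        · rw [if_neg (not_le.2 hlt)]
      exact (h2 le_rfl).continuousWithinAt.congr this (this x self_mem_Ici)
  · apply (h2 h.le).congr
    filter_upwards [isOpen_Ioi.mem_nhds (show x ∈ Ioi c from h)] with y hy
    rw [if_neg (not_le.2 (mem_Ioi.1 hy))]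

lemma glue_der {f1 f2 d1 d2 : ℝ → ℝ} {c x : ℝ} (h1 : x ≤ c → HasDerivAt f1 (d1 x) x)
    (h2 : c ≤ x → HasDerivAt f2 (d2 x) x) (hc : f1 c = f2 c) (hd : d1 c = d2 c) :
    HasDerivAt (fun t => if t ≤ c then f1 t else f2 t) (if x ≤ c then d1 x else d2 x) x := by
  rcases lt_trichotomy x c with h | h | h
  · rw [if_pos h.le]
    apply (h1 h.le).congr_of_eventuallyEq
    filter_upwards [isOpen_Iio.mem_nhds (show x ∈ Iio c from h)] with y hy
    rw [if_pos (le_of_lt (mem_Iio.1 hy))]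
  · subst h
    rw [if_pos le_rfl]
    rw [← hasDerivWithinAt_univ, ← Iic_union_Ici (a := x)]
    apply HasDerivWithinAt.union
    · apply (h1 le_rfl).hasDerivWithinAt.congr
      · intro y hy; exact if_pos hy
      · exact if_pos le_rfl
    · have : ∀ y ∈ Ici x, (if y ≤ x then f1 y else f2 y) = f2 y := by
        intro y hy
        rcases (mem_Ici.1 hy).eq_or_lt with rfl | hlt
        · rw [if_pos le_rfl, hc]
        · rw [if_neg (not_le.2 hlt)]
      rw [hd]
      exact (h2 le_rfl).hasDerivWithinAt.congr this (this x self_mem_Ici)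
  · rw [if_neg (not_le.2 h)]
    apply (h2 h.le).congr_of_eventuallyEq
    filter_upwards [isOpen_Ioi.mem_nhds (show x ∈ Ioi c from h)] with y hy
    rw [if_neg (not_le.2 (mem_Ioi.1 hy))]

lemma eig_exists {w : ℝ → ℝ} {L g R r : ℝ → ℝ → ℝ} (hL : LSol w L g)
    (hR : LSol (fun x => w (1 - x)) R r) {μ c : ℝ} (hc : c ∈ Ioo (0:ℝ) 1)
    (hr : r μ (1 - c) ≠ 0) (hLz : L μ c = 0) (hRz : R μ (1 - c) = 0) :
    IsNeumannEigenvalue w μ := by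
  set α := g μ c / (-(r μ (1 - c))) with hα
  have hd : g μ c = α * (-(r μ (1 - c))) := by rw [hα]; field_simp
  refine ⟨fun x => if x ≤ c then L μ x else α * R μ (1 - x),
    fun x => if x ≤ c then g μ x else α * (-(r μ (1 - x))), ?_, ?_, ?_, ?_, ?_, ?_⟩
  · intro x hx
    apply HasDerivAt.hasDerivWithinAt
    apply glue_der (f2 := fun x => α * R μ (1 - x)) (d1 := g μ) (d2 := fun x => α * (-(r μ (1 - x))))
    · intro h; exact hL.der μ x (h.trans_lt hc.2)
    · intro h
      exact ((hR.der μ (1 - x) (by linarith [hc.1])).comp_const_sub 1 x).const_mul α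
    · simp [hLz, hRz]
    · exact hd
  · intro x hx
    apply ContinuousAt.continuousWithinAt
    apply glue_cont (f1 := g μ) (f2 := fun x => α * (-(r μ (1 - x))))
    · intro h; exact (hL.gc μ).continuousAt (isOpen_Iio.mem_nhds (h.trans_lt hc.2))
    · intro h
      have : ContinuousAt (r μ) (1 - x) := (hR.gc μ).continuousAt
        (isOpen_Iio.mem_nhds (by rw [mem_Iio]; linarith [hc.1]))
      have h2 : ContinuousAt (fun x => r μ (1 - x)) x :=
        ContinuousAt.comp (g := r μ) (f := fun x : ℝ => 1 - x) this (by fun_prop)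
      exact h2.fun_neg.const_mul α
    · exact hd
  · simp [hc.1.le, hL.g0]
  · simp [not_le.2 hc.2, hR.g0]
  · exact ⟨0, by simp, by simp [hc.1.le, hL.L0]⟩
  · intro x hx
    have := glue_der (c := c) (x := x) (f1 := fun t => w t * g μ t)
      (f2 := fun t => w t * (α * (-(r μ (1 - t)))))
      (d1 := fun t => -(μ * w t * L μ t)) (d2 := fun t => -(μ * w t * (α * R μ (1 - t))))
      (fun h => hL.ode μ x ⟨hx.1, hx.2⟩) (fun h => by
        have := ((hR.ode μ (1 - x) ⟨by linarith [hx.2], by linarith [hx.1]⟩).comp_const_sub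
          1 x).const_mul (-α)
        refine der_conv this (fun t => ?_) ?_
        · simp only [sub_sub_cancel]; ring
        · simp only [sub_sub_cancel]; ring)
      (by simp only [hd]) (by simp [hLz, hRz])
    refine der_conv this (fun t => ?_) ?_
    · dsimp only; split_ifs <;> rfl
    · dsimp only; split_ifs <;> rfl

lemma mkWt {w : ℝ → ℝ} (hc : ContinuousOn w (Icc 0 1)) (hp : ∀ x ∈ Ioo (0:ℝ) 1, 0 < w x)
    (h0 : 0 < w 0 ∨ (w 0 = 0 ∧ ∃ δ > 0, MonotoneOn w (Icc 0 δ))) : Wt w := by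
  refine ⟨hc.mono Ico_subset_Icc_self, hp, ?_, ?_⟩
  · rcases h0 with h | h
    · exact h.le
    · exact h.1.ge
  · rcases h0 with h | ⟨_, δ, hδ, hm⟩
    · have h1 : ∀ᶠ y in 𝓝[Icc 0 1] (0:ℝ), w y ∈ Ioo (w 0 / 2) (2 * w 0) :=
        (hc 0 (by simp)).eventually (Ioo_mem_nhds (by linarith) (by linarith))
      rw [eventually_nhdsWithin_iff] at h1
      obtain ⟨ε, hε, hball⟩ := Metric.eventually_nhds_iff.1 h1
      have key : ∀ s, 0 ≤ s → s < min ε 1 → w s ∈ Ioo (w 0 / 2) (2 * w 0) := by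
        intro s hs hs1
        rw [lt_min_iff] at hs1
        refine hball ?_ ⟨hs, hs1.2.le⟩
        rw [dist_zero_right, Real.norm_of_nonneg hs]; exact hs1.1
      refine ⟨min ε 1, lt_min hε one_pos, min_le_right _ _, 4, by norm_num, fun s hs t ht => ?_⟩
      have a := key s hs.1.le hs.2
      have b := key t ht.1 (ht.2.trans_lt hs.2)
      linarith [a.1, b.2]
    · refine ⟨min δ 1, lt_min hδ one_pos, min_le_right _ _, 1, by norm_num, fun s hs t ht => ?_⟩
      rw [one_mul]
      have hs1 := hs.2.trans_le (min_le_left _ _)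
      exact hm ⟨ht.1, ht.2.trans hs1.le⟩ ⟨hs.1.le, hs1.le⟩ ht.2

lemma LSol.ev {w : ℝ → ℝ} {L g : ℝ → ℝ → ℝ} (hS : LSol w L g) {μ c : ℝ} (hc : c < 1)
    (h : ∀ x ∈ Icc 0 c, 0 < L μ x) : ∀ᶠ μ' in 𝓝 μ, ∀ x ∈ Icc 0 c, 0 < L μ' x := by
  apply isCompact_Icc.eventually_forall_of_forall_eventually (P := fun μ1 x => 0 < L μ1 x)
  intro y hy
  exact (hS.jc μ y (hy.2.trans_lt hc)).eventually (lt_mem_nhds (h y hy))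

lemma LSol.lim {w : ℝ → ℝ} {L g : ℝ → ℝ → ℝ} (hS : LSol w L g) {μ c : ℝ} (hc : c < 1)
    (h : ∃ᶠ μ' in 𝓝[<] μ, ∀ x ∈ Icc 0 c, 0 < L μ' x) : ∀ x ∈ Icc 0 c, 0 ≤ L μ x := by
  intro x hx
  by_contra hneg
  push Not at hneg
  have hca : ContinuousAt (fun μ' => L μ' x) μ :=
    ContinuousAt.comp (g := fun p : ℝ × ℝ => L p.1 p.2) (f := fun μ' : ℝ => (μ', x))
      (hS.jc μ x (hx.2.trans_lt hc)) (by fun_prop)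
  have h1 : ∀ᶠ μ' in 𝓝 μ, L μ' x < 0 := hca.eventually (gt_mem_nhds hneg)
  obtain ⟨μ', h2, h3⟩ := (h.and_eventually (h1.filter_mono nhdsWithin_le_nhds)).exists
  exact lt_asymm (h2 x hx) h3

/-- first zero or positive everywhere -/
lemma LSol.first {w : ℝ → ℝ} {L g : ℝ → ℝ → ℝ} (hS : LSol w L g) {μ : ℝ}
    (h : ¬ ∀ x ∈ Ico (0:ℝ) 1, 0 < L μ x) :
    ∃ a ∈ Ioo (0:ℝ) 1, L μ a = 0 ∧ ∀ x ∈ Ico 0 a, 0 < L μ x := by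
  push Not at h
  obtain ⟨b, hb, hLb⟩ := h
  have hcont : ContinuousOn (L μ) (Icc 0 b) := (hS.contx μ).mono fun x hx => hx.2.trans_lt hb.2
  have hcl : IsCompact (Icc 0 b ∩ L μ ⁻¹' Iic 0) :=
    isCompact_Icc.of_isClosed_subset (hcont.preimage_isClosed_of_isClosed isClosed_Icc isClosed_Iic)
      inter_subset_left
  obtain ⟨a, ha, hle⟩ := hcl.exists_isLeast ⟨b, ⟨hb.1, le_rfl⟩, hLb⟩
  have hpos : ∀ x ∈ Ico 0 a, 0 < L μ x := by
    intro x hx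
    by_contra hn
    exact absurd (hle ⟨⟨hx.1, hx.2.le.trans ha.1.2⟩, not_lt.1 hn⟩) (not_le.2 hx.2)
  have ha0 : 0 < a := by
    rcases ha.1.1.eq_or_lt with h | h
    · have := ha.2
      rw [← h, mem_preimage, hS.L0, mem_Iic] at this
      linarith
    · exact h
  have ha1 : a < 1 := ha.1.2.trans_lt hb.2
  refine ⟨a, ⟨ha0, ha1⟩, le_antisymm ha.2 ?_, hpos⟩
  have hcl : ContinuousWithinAt (L μ) (Iio a) a :=
    (hS.der μ a ha1).continuousAt.continuousWithinAt
  refine ge_of_tendsto hcl.tendsto ?_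
  filter_upwards [Ioo_mem_nhdsLT ha0] with t ht
  exact (hpos t ⟨ht.1.le, ht.2⟩).le

lemma LSol.pos0 {w : ℝ → ℝ} {L g : ℝ → ℝ → ℝ} (hS : LSol w L g) (μ : ℝ) :
    ∃ e ∈ Ioo (0:ℝ) 1, ∀ x ∈ Icc 0 e, 0 < L μ x := by
  by_cases h : ∀ x ∈ Ico (0:ℝ) 1, 0 < L μ x
  · exact ⟨1/2, ⟨by norm_num, by norm_num⟩, fun x hx => h x ⟨hx.1, by linarith [hx.2]⟩⟩
  · obtain ⟨a, ha, _, hpos⟩ := hS.first h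
    exact ⟨a / 2, ⟨by linarith [ha.1], by linarith [ha.1, ha.2]⟩,
      fun x hx => hpos x ⟨hx.1, by linarith [hx.2, ha.1]⟩⟩

/-- positivity extends a little -/
lemma LSol.ext {w : ℝ → ℝ} {L g : ℝ → ℝ → ℝ} (hS : LSol w L g) {μ c : ℝ} (hc0 : 0 ≤ c) (hc : c < 1)
    (h : ∀ x ∈ Icc 0 c, 0 < L μ x) : ∃ d ∈ Ioo c 1, ∀ x ∈ Icc 0 d, 0 < L μ x := by
  by_cases h' : ∀ x ∈ Ico (0:ℝ) 1, 0 < L μ x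
  · obtain ⟨d, hd, hd1⟩ := exists_between hc
    exact ⟨d, ⟨hd, hd1⟩, fun x hx => h' x ⟨hx.1, hx.2.trans_lt hd1⟩⟩
  · obtain ⟨a, ha, ha0, hpos⟩ := hS.first h'
    have hca : c < a := by
      by_contra hn
      have := h a ⟨ha.1.le, not_lt.1 hn⟩
      linarith
    obtain ⟨d, hd, hda⟩ := exists_between hca
    exact ⟨d, ⟨hd, hda.trans ha.2⟩, fun x hx => hpos x ⟨hx.1, hx.2.trans_lt hda⟩⟩

lemma rep2 {w : ℝ → ℝ} {L g R r : ℝ → ℝ → ℝ} (hw : Wt w) (hw' : Wt (fun x => w (1 - x)))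
    (hL : LSol w L g) (hR : LSol (fun x => w (1 - x)) R r) {μ c : ℝ} (hc : c ∈ Ioo (0:ℝ) 1)
    (hLp : ∀ x ∈ Ico 0 c, 0 < L μ x) (hRp : ∀ x ∈ Ico 0 (1 - c), 0 < R μ x)
    {φ φd : ℝ → ℝ} (hφ : NeumannSol w μ φ φd) :
    (∀ x ∈ Icc 0 c, φ x = φ 0 * L μ x) ∧ (∀ x ∈ Icc c 1, φ x = φ 1 * R μ (1 - x)) ∧
      φ 0 * g μ c = -(φ 1 * r μ (1 - c)) := by
  obtain ⟨h1, h2⟩ := hφ.left.rep hw hL hc hLp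
  obtain ⟨h3, h4⟩ := hφ.right.rep hw' hR (c := 1 - c)
    ⟨by linarith [hc.2], by linarith [hc.1]⟩ hRp
  refine ⟨h1, fun x hx => ?_, ?_⟩
  · have := h3 (1 - x) ⟨by linarith [hx.2], by linarith [hx.1]⟩
    simpa using this
  · simp only [sub_sub_cancel, sub_zero] at h4
    linarith

theorem singular_ode_first_neumann_eigenvalue
    (ω : ℝ → ℝ)
    (hωc : ContinuousOn ω (Icc 0 1))
    (hωpos : ∀ x ∈ Ioo (0:ℝ) 1, 0 < ω x)
    (hω0 : 0 < ω 0 ∨ (ω 0 = 0 ∧ ∃ δ > 0, MonotoneOn ω (Icc 0 δ)))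
    (hω1 : 0 < ω 1 ∨ (ω 1 = 0 ∧ ∃ δ' > 0, AntitoneOn ω (Icc (1 - δ') 1))) :
    ∃ μ > (0:ℝ), IsNeumannEigenvalue ω μ ∧
      (∀ μ', 0 < μ' → IsNeumannEigenvalue ω μ' → μ ≤ μ') ∧
      ∀ φ φd ψ ψd : ℝ → ℝ, NeumannSol ω μ φ φd → NeumannSol ω μ ψ ψd →
        ∃ c : ℝ, c ≠ 0 ∧ ∀ x ∈ Icc (0:ℝ) 1, ψ x = c * φ x := by
  have hw : Wt ω := mkWt hωc hωpos hω0
  have hw' : Wt (fun x => ω (1 - x)) := by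
    apply mkWt
    · exact hωc.comp (by fun_prop) fun x hx => ⟨by linarith [hx.2], by linarith [hx.1]⟩
    · exact fun x hx => hωpos _ ⟨by linarith [hx.2], by linarith [hx.1]⟩
    · simp only [sub_zero]
      rcases hω1 with h | ⟨h, δ, hδ, hm⟩
      · exact Or.inl h
      · refine Or.inr ⟨h, δ, hδ, fun x hx y hy hxy => ?_⟩
        exact hm ⟨by linarith [hy.2], by linarith [hy.1]⟩ ⟨by linarith [hx.2], by linarith [hx.1]⟩
          (by linarith)
  obtain ⟨L, g, hL⟩ := hw.exists_LSol
  obtain ⟨R, r, hR⟩ := hw'.exists_LSol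
  set S : Set ℝ := {μ | ∃ c ∈ Ioo (0:ℝ) 1, (∀ x ∈ Icc 0 c, 0 < L μ x) ∧
    ∀ x ∈ Icc 0 (1 - c), 0 < R μ x} with hS
  have hSo : IsOpen S := by
    rw [isOpen_iff_mem_nhds]
    rintro μ ⟨c, hc, h1, h2⟩
    filter_upwards [hL.ev hc.2 h1, hR.ev (by linarith [hc.1]) h2] with μ' h3 h4
    exact ⟨c, hc, h3, h4⟩
  have hS0 : (0:ℝ) ∈ S := by
    refine ⟨1/2, ⟨by norm_num, by norm_num⟩, fun x hx => ?_, fun x hx => ?_⟩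
    · rw [hL.Lz x (by linarith [hx.2])]; exact one_pos
    · rw [hR.Lz x (by linarith [hx.2])]; exact one_pos
  obtain ⟨M1, hM1, hb1⟩ := hL.bdd hw
  obtain ⟨M2, hM2, hb2⟩ := hR.bdd hw'
  set T : Set ℝ := Ici 0 ∩ Sᶜ with hT
  have hTc : IsClosed T := isClosed_Ici.inter hSo.isClosed_compl
  have hTn : T.Nonempty := by
    refine ⟨max M1 M2, hM1.le.trans (le_max_left _ _), ?_⟩
    rintro ⟨c, hc, h1, h2⟩
    rcases le_total (1/2) c with h | h
    · exact hb1 _ (le_max_left _ _) fun x hx => h1 x ⟨hx.1, hx.2.trans h⟩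
    · exact hb2 _ (le_max_right _ _) fun x hx => h2 x ⟨hx.1, by linarith [hx.2]⟩
  have hTb : BddBelow T := ⟨0, fun x hx => hx.1⟩
  have hμT := hTc.csInf_mem hTn hTb
  set μ := sInf T with hμ
  have hμ0 : 0 < μ := by
    rcases (show (0:ℝ) ≤ μ from hμT.1).eq_or_lt with h | h
    · exact absurd (h ▸ hS0) hμT.2
    · exact h
  have hlt : ∀ μ', 0 ≤ μ' → μ' < μ → μ' ∈ S := by
    intro μ' h0 h1
    by_contra hn
    exact absurd (csInf_le hTb ⟨h0, hn⟩) (not_le.2 h1)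
  -- the alternative
  have halt : ∀ x ∈ Ioo (0:ℝ) 1, (∀ y ∈ Icc 0 x, 0 ≤ L μ y) ∨ ∀ y ∈ Icc 0 (1 - x), 0 ≤ R μ y := by
    intro x hx
    have h1 : ∀ᶠ μ' in 𝓝[<] μ, (∀ y ∈ Icc 0 x, 0 < L μ' y) ∨ ∀ y ∈ Icc 0 (1 - x), 0 < R μ' y := by
      filter_upwards [Ioo_mem_nhdsLT hμ0] with μ' hm
      obtain ⟨c, hc, h1, h2⟩ := hlt μ' hm.1.le hm.2
      rcases le_total x c with h | h
      · exact Or.inl fun y hy => h1 y ⟨hy.1, hy.2.trans h⟩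
      · exact Or.inr fun y hy => h2 y ⟨hy.1, by linarith [hy.2]⟩
    rcases frequently_or_distrib.1 h1.frequently with h | h
    · exact Or.inl (hL.lim hx.2 h)
    · exact Or.inr (hR.lim (by linarith [hx.1]) h)
  -- the common zero
  obtain ⟨a, ha, hLa, hLp⟩ : ∃ a ∈ Ioo (0:ℝ) 1, L μ a = 0 ∧ ∀ x ∈ Ico 0 a, 0 < L μ x := by
    apply hL.first
    intro hall
    obtain ⟨e, he, hRe⟩ := hR.pos0 μ
    apply hμT.2
    refine ⟨1 - e, ⟨by linarith [he.2], by linarith [he.1]⟩, fun x hx => ?_, fun x hx => ?_⟩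
    · exact hall x ⟨hx.1, by linarith [hx.2, he.1]⟩
    · exact hRe x ⟨hx.1, by linarith [hx.2]⟩
  have hRnn : ∀ y ∈ Ico 0 (1 - a), 0 ≤ R μ y := by
    intro y hy
    obtain ⟨z, hyz, hz⟩ := exists_between hy.2
    rcases halt (1 - z) ⟨by linarith [hy.1, ha.1], by linarith [hy.1]⟩ with h | h
    · have := hL.strict hw hμ0 (x := 1 - z) (by linarith [hy.1]) (fun t ht => h t ⟨ht.1, ht.2.le⟩)
        ha.1.le (show a < 1 - z by linarith) le_rfl
      have h2 := h (1 - z) ⟨by linarith [ha.1], le_rfl⟩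
      linarith
    · exact h y ⟨hy.1, by linarith⟩
  have ha1 : 1 - a < 1 := by linarith [ha.1]
  have ha2 : 0 < 1 - a := by linarith [ha.2]
  have hRp : ∀ y ∈ Ico 0 (1 - a), 0 < R μ y := by
    intro y hy
    obtain ⟨z, hyz, hz⟩ := exists_between hy.2
    have h1 := hR.strict hw' hμ0 ha1 hRnn hy.1 hyz hz.le
    have h2 := hRnn z ⟨hy.1.trans hyz.le, hz⟩
    linarith
  have hRa : R μ (1 - a) = 0 := by
    apply le_antisymm
    · by_contra hn
      push Not at hn
      have hall : ∀ x ∈ Icc 0 (1 - a), 0 < R μ x := by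
        intro x hx
        rcases hx.2.eq_or_lt with rfl | h
        · exact hn
        · exact hRp x ⟨hx.1, h⟩
      obtain ⟨d, hd, hdp⟩ := hR.ext ha2.le ha1 hall
      apply hμT.2
      refine ⟨1 - d, ⟨by linarith [hd.2], by linarith [hd.1, ha.2]⟩, fun x hx => ?_, fun x hx => ?_⟩
      · exact hLp x ⟨hx.1, by linarith [hx.2, hd.1]⟩
      · exact hdp x ⟨hx.1, by linarith [hx.2]⟩
    · have hcl : ContinuousWithinAt (R μ) (Iio (1 - a)) (1 - a) :=
        (hR.der μ _ ha1).continuousAt.continuousWithinAt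
      refine ge_of_tendsto hcl.tendsto ?_
      filter_upwards [Ioo_mem_nhdsLT ha2] with t ht
      exact hRnn t ⟨ht.1.le, ht.2⟩
  have hga := hL.gneg hw hμ0 ha.2 (fun y hy => (hLp y hy).le) a ⟨ha.1, le_rfl⟩
  have hra := hR.gneg hw' hμ0 ha1 hRnn (1 - a) ⟨ha2, le_rfl⟩
  refine ⟨μ, hμ0, eig_exists hL hR ha hra.ne hLa hRa, ?_, ?_⟩
  · rintro μ' hμ' ⟨φ, φd, hφ⟩
    by_contra hn
    push Not at hn
    obtain ⟨c, hc, h1, h2⟩ := hlt μ' hμ'.le hn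
    obtain ⟨e1, e2, e3⟩ := rep2 hw hw' hL hR hc (fun x hx => h1 x ⟨hx.1, hx.2.le⟩)
      (fun x hx => h2 x ⟨hx.1, hx.2.le⟩) hφ
    have c1 : 1 - c < 1 := by linarith [hc.1]
    have c2 : 0 < 1 - c := by linarith [hc.2]
    have g1 := hL.gneg hw hμ' hc.2 (fun y hy => (h1 y ⟨hy.1, hy.2.le⟩).le) c ⟨hc.1, le_rfl⟩
    have g2 := hR.gneg hw' hμ' c1 (fun y hy => (h2 y ⟨hy.1, hy.2.le⟩).le) (1 - c) ⟨c2, le_rfl⟩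
    have p1 := h1 c ⟨hc.1.le, le_rfl⟩
    have p2 := h2 (1 - c) ⟨c2.le, le_rfl⟩
    have e4 : φ 0 * L μ' c = φ 1 * R μ' (1 - c) := by
      rw [← e1 c ⟨hc.1.le, le_rfl⟩, ← e2 c ⟨le_rfl, hc.2.le⟩]
    have e5 : φ 0 * (L μ' c * r μ' (1 - c) + g μ' c * R μ' (1 - c)) = 0 := by
      linear_combination r μ' (1 - c) * e4 + R μ' (1 - c) * e3
    have e6 : L μ' c * r μ' (1 - c) + g μ' c * R μ' (1 - c) < 0 := by
      have := mul_neg_of_pos_of_neg p1 g2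
      have := mul_neg_of_neg_of_pos g1 p2
      linarith
    have z0 : φ 0 = 0 := (mul_eq_zero.1 e5).resolve_right e6.ne
    have z1 : φ 1 = 0 := by
      rw [z0, zero_mul] at e4
      exact (mul_eq_zero.1 e4.symm).resolve_right p2.ne'
    obtain ⟨x, hx, hxne⟩ := hφ.2.2.2.2.1
    apply hxne
    rcases le_total x c with h | h
    · rw [e1 x ⟨hx.1, h⟩, z0, zero_mul]
    · rw [e2 x ⟨h, hx.2⟩, z1, zero_mul]
  · intro φ φd ψ ψd hφ hψ
    have hne : ∀ φ φd : ℝ → ℝ, NeumannSol ω μ φ φd → φ 0 ≠ 0 := by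
      intro φ φd hφ z0
      obtain ⟨e1, e2, e3⟩ := rep2 hw hw' hL hR ha hLp hRp hφ
      have z1 : φ 1 = 0 := by
        rw [z0, zero_mul, eq_comm, neg_eq_zero] at e3
        exact (mul_eq_zero.1 e3).resolve_right hra.ne
      obtain ⟨x, hx, hxne⟩ := hφ.2.2.2.2.1
      apply hxne
      rcases le_total x a with h | h
      · rw [e1 x ⟨hx.1, h⟩, z0, zero_mul]
      · rw [e2 x ⟨h, hx.2⟩, z1, zero_mul]
    have hφ0 := hne φ φd hφ
    have hψ0 := hne ψ ψd hψ
    obtain ⟨e1, e2, e3⟩ := rep2 hw hw' hL hR ha hLp hRp hφ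
    obtain ⟨f1, f2, f3⟩ := rep2 hw hw' hL hR ha hLp hRp hψ
    have h1 : ψ 1 * φ 0 = ψ 0 * φ 1 := by
      apply mul_right_cancel₀ hra.ne
      linear_combination φ 0 * f3 - ψ 0 * e3
    refine ⟨ψ 0 / φ 0, div_ne_zero hψ0 hφ0, fun x hx => ?_⟩
    rw [div_mul_eq_mul_div, eq_div_iff hφ0]
    rcases le_total x a with h | h
    · rw [e1 x ⟨hx.1, h⟩, f1 x ⟨hx.1, h⟩]; ring
    · rw [e2 x ⟨h, hx.2⟩, f2 x ⟨h, hx.2⟩]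
      linear_combination R μ (1 - x) * h1
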